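/- For the dichotomy algorithm (A2), one has 0 ≤ max{U_k − λ^G_{π,ν}, λ^G_{π,ν} − L_k} ≤ (U_0 − L_0) 2^{−k} for all k ≥ 0. -/

import Mathlib

open Finset

/-- Dirichlet form on the path with vertices `{1,…,n}`;
`ν i` denotes the weight of edge `{i, i+1}`. -/
noncomputable def EForm (n : ℕ) (ν : ℕ → ℝ) (f g : ℕ → ℝ) : ℝ :=
  ∑ i ∈ Finset.Icc 1 (n - 1), (f i - f (i + 1)) * (g i - g (i + 1)) * ν i

/-- Mean of `f` with respect to `π` on `{1,…,n}`. -/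
noncomputable def piMean (n : ℕ) (π : ℕ → ℝ) (f : ℕ → ℝ) : ℝ :=
  ∑ i ∈ Finset.Icc 1 n, f i * π i

/-- Variance of `f` with respect to `π` on `{1,…,n}`. -/
noncomputable def varPi (n : ℕ) (π : ℕ → ℝ) (f : ℕ → ℝ) : ℝ :=
  piMean n π (fun i => (f i) ^ 2) - (piMean n π f) ^ 2

/-- `f` is non-constant on `{1,…,n}`. -/
def Nonconstant (n : ℕ) (f : ℕ → ℝ) : Prop :=
  ∃ i ∈ Finset.Icc 1 n, ∃ j ∈ Finset.Icc 1 n, f i ≠ f j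

/-- `lam` is the spectral gap: the minimum of the Rayleigh quotients over
non-constant functions. -/
def IsSpectralGap (n : ℕ) (π ν : ℕ → ℝ) (lam : ℝ) : Prop :=
  IsLeast {r : ℝ | ∃ f : ℕ → ℝ, Nonconstant n f ∧ r = EForm n ν f f / varPi n π f} lam

/-- The positive-part recursion with parameter `lam`:
`ψ(i+1) = ψ(i) + max{[ψ(i)−ψ(i−1)]ν(i−1,i) − λ π(i) ψ(i), 0}/ν(i,i+1)` for `1 ≤ i < n`. -/
def PosPartRec (n : ℕ) (π ν : ℕ → ℝ) (lam : ℝ) (ψ : ℕ → ℝ) : Prop :=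
  ∀ i, 1 ≤ i → i < n →
    ψ (i + 1) = ψ i + max ((ψ i - ψ (i - 1)) * ν (i - 1) - lam * (π i * ψ i)) 0 / ν i

/-
For a trial value `λ > 0` let `ψ` solve the positive-part recursion; it is nondecreasing, and once
its flow vanishes it is a nonnegative constant. The sign of `π(ψ)` locates `λ` relative to the gap.

If `π(ψ) ≥ 0`, truncate `ψ` at the level `c` for which `f = min(ψ, c)` has mean zero. Wherever
`f < c` the flow of `ψ` is positive, so the positive part is inactive and `f` satisfies
`-div(flow f) ≥ λ π f`. Testing this against `f - c ≤ 0` gives `E(f, f) ≤ λ Var(f)`.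

If `π(ψ) ≤ 0`, then `ψ` is strictly increasing. For an arbitrary `f`, let `S` have increments
`(Δf)² / Δψ`. By Cauchy–Schwarz `(f j - f i)² ≤ (ψ j - ψ i) (S j - S i)`, so `Var(f) ≤ Cov(ψ, S)`.
Summation by parts turns the covariance into a sum over edges, where the recursion bounds
`λ Cov(ψ, S)` by `∑ ν Δψ ΔS = E(f, f)`.
-/

theorem sum_Icc_sub_mul_add_sum_mul_sub {R : Type*} [Ring R] {F : ℕ → R} (hF : F 0 = 0)
    (g : ℕ → R) (n : ℕ) :
    ∑ i ∈ Icc 1 n, (F i - F (i - 1)) * g i + ∑ i ∈ Icc 1 (n - 1), F i * (g (i + 1) - g i) =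
      F n * g n := by
  induction n with
  | zero => simp [hF]
  | succ n ih =>
    cases n with
    | zero => simp [hF]
    | succ n =>
      rw [Nat.add_sub_cancel] at ih
      rw [Nat.add_sub_cancel, sum_Icc_succ_top (b := n + 1) (by lia),
        sum_Icc_succ_top (b := n) (by lia) fun i => F i * (g (i + 1) - g i),
        add_add_add_comm, ih, Nat.add_sub_cancel]
      noncomm_ring

section Moments

variable {n : ℕ} {π : ℕ → ℝ}

/-- Covariance of `f` and `g` with respect to `π` on `{1,…,n}`, the bilinear form whose diagonal
is `varPi`. -/
noncomputable def covPi (n : ℕ) (π f g : ℕ → ℝ) : ℝ :=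
  piMean n π (fun i => f i * g i) - piMean n π f * piMean n π g

theorem covPi_self (n : ℕ) (π f : ℕ → ℝ) : covPi n π f f = varPi n π f := by
  simp only [covPi, varPi, sq]

theorem piMean_eq_of_forall_eq (hπ1 : ∑ i ∈ Icc 1 n, π i = 1) {f : ℕ → ℝ} {c : ℝ}
    (hf : ∀ i ∈ Icc 1 n, f i = c) : piMean n π f = c := by
  rw [piMean, sum_congr rfl fun i hi => by rw [hf i hi], ← mul_sum, hπ1, mul_one]

theorem nonconstant_of_ne_piMean (hπ1 : ∑ i ∈ Icc 1 n, π i = 1) {f : ℕ → ℝ} {i : ℕ}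
    (hi : i ∈ Icc 1 n) (hf : f i ≠ piMean n π f) : Nonconstant n f := by
  by_contra hconst
  refine hf (piMean_eq_of_forall_eq hπ1 fun j hj => ?_).symm
  by_contra hne
  exact hconst ⟨j, hj, i, hi, hne⟩

theorem covPi_eq_sum_sub_piMean_mul (n : ℕ) (π f g : ℕ → ℝ) :
    covPi n π f g = ∑ i ∈ Icc 1 n, (f i - piMean n π f) * π i * g i := by
  rw [covPi, piMean, piMean.eq_def n π g, mul_sum, ← sum_sub_distrib]
  exact sum_congr rfl fun i _ => by ring

theorem sum_sub_piMean_mul_eq_zero (hπ1 : ∑ i ∈ Icc 1 n, π i = 1) (f : ℕ → ℝ) :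
    ∑ i ∈ Icc 1 n, (f i - piMean n π f) * π i = 0 := by
  simp only [sub_mul, sum_sub_distrib, ← mul_sum, hπ1, mul_one]
  exact sub_self _

theorem two_mul_covPi (hπ1 : ∑ i ∈ Icc 1 n, π i = 1) (f g : ℕ → ℝ) :
    2 * covPi n π f g =
      ∑ i ∈ Icc 1 n, ∑ j ∈ Icc 1 n, (f j - f i) * (g j - g i) * (π i * π j) := by
  have expand (i j : ℕ) : (f j - f i) * (g j - g i) * (π i * π j) =
      π i * (f j * g j * π j) + f i * g i * π i * π j
        - f i * π i * (g j * π j) - g i * π i * (f j * π j) := by ring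
  simp only [expand, sum_add_distrib, sum_sub_distrib, ← sum_mul_sum, hπ1, covPi, piMean]
  ring

theorem varPi_pos (hπ : ∀ i ∈ Icc 1 n, 0 < π i) (hπ1 : ∑ i ∈ Icc 1 n, π i = 1) {f : ℕ → ℝ}
    (hf : Nonconstant n f) : 0 < varPi n π f := by
  obtain ⟨i, hi, j, hj, hij⟩ := hf
  have term_nonneg : ∀ k ∈ Icc 1 n, ∀ l ∈ Icc 1 n,
      0 ≤ (f l - f k) * (f l - f k) * (π k * π l) := fun k hk l hl =>
    mul_nonneg (mul_self_nonneg _) (mul_pos (hπ k hk) (hπ l hl)).le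
  have term_pos : 0 < (f j - f i) * (f j - f i) * (π i * π j) :=
    mul_pos (mul_self_pos.2 (sub_ne_zero.2 hij.symm)) (mul_pos (hπ i hi) (hπ j hj))
  rw [← covPi_self, ← mul_pos_iff_of_pos_left two_pos, two_mul_covPi hπ1]
  exact sum_pos' (fun k hk => sum_nonneg (term_nonneg k hk))
    ⟨i, hi, sum_pos' (term_nonneg i hi) ⟨j, hj, term_pos⟩⟩

theorem varPi_le_covPi (hπ : ∀ i ∈ Icc 1 n, 0 ≤ π i) (hπ1 : ∑ i ∈ Icc 1 n, π i = 1)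
    {f g h : ℕ → ℝ}
    (hfgh : ∀ i ∈ Icc 1 n, ∀ j ∈ Icc 1 n, i ≤ j →
      (f j - f i) ^ 2 ≤ (g j - g i) * (h j - h i)) :
    varPi n π f ≤ covPi n π g h := by
  rw [← covPi_self, ← mul_le_mul_iff_right₀ two_pos, two_mul_covPi hπ1, two_mul_covPi hπ1]
  refine sum_le_sum fun i hi => sum_le_sum fun j hj =>
    mul_le_mul_of_nonneg_right ?_ (mul_nonneg (hπ i hi) (hπ j hj))
  rcases le_total i j with hij | hji
  · linarith [hfgh i hi j hj hij]
  · linarith [hfgh j hj i hi hji]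

theorem covPi_eq_sum_partialSum_mul_sub (hπ1 : ∑ i ∈ Icc 1 n, π i = 1) (g S : ℕ → ℝ) :
    covPi n π g S = ∑ k ∈ Icc 1 (n - 1),
      (∑ j ∈ Icc 1 k, (piMean n π g - g j) * π j) * (S (k + 1) - S k) := by
  set F : ℕ → ℝ := fun k => ∑ j ∈ Icc 1 k, (piMean n π g - g j) * π j with hF
  have F_n : F n = 0 := by
    rw [← neg_eq_zero, hF, ← sum_neg_distrib, ← sum_sub_piMean_mul_eq_zero hπ1 g]
    exact sum_congr rfl fun j _ => by ring
  have F_sub : ∀ i ∈ Icc 1 n, F i - F (i - 1) = (piMean n π g - g i) * π i := by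
    intro i hi
    obtain ⟨i, rfl⟩ := Nat.exists_eq_add_of_le' (mem_Icc.1 hi).1
    simp only [hF, sum_Icc_succ_top (show 1 ≤ i + 1 by lia), Nat.add_sub_cancel]
    ring
  have parts := sum_Icc_sub_mul_add_sum_mul_sub (F := F) (by simp [hF]) S n
  rw [F_n, zero_mul, sum_congr rfl fun i hi => by rw [F_sub i hi]] at parts
  rw [eq_neg_of_add_eq_zero_right parts, covPi_eq_sum_sub_piMean_mul, ← sum_neg_distrib]
  exact sum_congr rfl fun i _ => by ring

theorem exists_piMean_min_eq (hπ1 : ∑ i ∈ Icc 1 n, π i = 1) {f : ℕ → ℝ} {m M t : ℝ}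
    (hm : ∀ i ∈ Icc 1 n, m ≤ f i) (hM : ∀ i ∈ Icc 1 n, f i ≤ M)
    (ht : t ∈ Set.Icc m (piMean n π f)) :
    ∃ c ≤ M, piMean n π (fun i => min (f i) c) = t := by
  obtain ⟨i, hi⟩ : (Icc 1 n).Nonempty :=
    nonempty_of_sum_ne_zero (hπ1.trans_ne one_ne_zero)
  have hcont : Continuous fun c => piMean n π fun i => min (f i) c := by
    unfold piMean
    fun_prop
  have at_m : piMean n π (fun i => min (f i) m) = m :=
    piMean_eq_of_forall_eq hπ1 fun i hi => min_eq_right (hm i hi)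
  have at_M : piMean n π (fun i => min (f i) M) = piMean n π f :=
    sum_congr rfl fun i hi => by simp only [min_eq_left (hM i hi)]
  obtain ⟨c, hc, hct⟩ := intermediate_value_Icc ((hm i hi).trans (hM i hi)) hcont.continuousOn
    (by simpa only [at_m, at_M] using ht)
  exact ⟨c, hc.2, hct⟩

end Moments

section RayleighQuotient

variable {n : ℕ} {π ν : ℕ → ℝ} {gap lam : ℝ}

theorem IsSpectralGap.le_of_EForm_le (hgap : IsSpectralGap n π ν gap)
    (hπ : ∀ i ∈ Icc 1 n, 0 < π i) (hπ1 : ∑ i ∈ Icc 1 n, π i = 1) {f : ℕ → ℝ}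
    (hf : Nonconstant n f) (hle : EForm n ν f f ≤ lam * varPi n π f) : gap ≤ lam :=
  (hgap.2 ⟨f, hf, rfl⟩).trans ((div_le_iff₀ (varPi_pos hπ hπ1 hf)).2 hle)

theorem IsSpectralGap.le_of_forall_le_EForm (hgap : IsSpectralGap n π ν gap)
    (hπ : ∀ i ∈ Icc 1 n, 0 < π i) (hπ1 : ∑ i ∈ Icc 1 n, π i = 1)
    (hle : ∀ f, lam * varPi n π f ≤ EForm n ν f f) : lam ≤ gap := by
  obtain ⟨f, hf, rfl⟩ := hgap.1
  exact (le_div_iff₀ (varPi_pos hπ hπ1 hf)).2 (hle f)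

/-- The flow of the gradient of `f` through the edge `{i, i+1}`. The convention `ν 0 = 0` makes
the flow vanish at `i = 0`, whatever the irrelevant value `f 0` is. -/
def edgeFlow (ν f : ℕ → ℝ) (i : ℕ) : ℝ :=
  (f (i + 1) - f i) * ν i

theorem edgeFlow_zero (hν0 : ν 0 = 0) (f : ℕ → ℝ) : edgeFlow ν f 0 = 0 := by
  rw [edgeFlow, hν0, mul_zero]

theorem edgeFlow_eq_zero_iff {f : ℕ → ℝ} {i : ℕ} (hνi : ν i ≠ 0) :
    edgeFlow ν f i = 0 ↔ f (i + 1) = f i := by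
  rw [edgeFlow, mul_eq_zero_iff_right hνi, sub_eq_zero]

theorem EForm_eq_sum_edgeFlow_sub_mul (hν0 : ν 0 = 0) (hνn : ν n = 0) (f g : ℕ → ℝ) :
    EForm n ν f g = ∑ i ∈ Icc 1 n, (edgeFlow ν f (i - 1) - edgeFlow ν f i) * g i := by
  have parts := sum_Icc_sub_mul_add_sum_mul_sub (edgeFlow_zero hν0 f) g n
  rw [edgeFlow.eq_def ν f n, hνn, mul_zero, zero_mul] at parts
  calc EForm n ν f g
      = ∑ i ∈ Icc 1 (n - 1), edgeFlow ν f i * (g (i + 1) - g i) :=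
        sum_congr rfl fun i _ => by rw [edgeFlow]; ring
    _ = -∑ i ∈ Icc 1 n, (edgeFlow ν f i - edgeFlow ν f (i - 1)) * g i :=
        eq_neg_of_add_eq_zero_right parts
    _ = ∑ i ∈ Icc 1 n, (edgeFlow ν f (i - 1) - edgeFlow ν f i) * g i := by
        rw [← sum_neg_distrib]
        exact sum_congr rfl fun i _ => by ring

-- Subtracting `c` from the test function changes neither side, and `f - c ≤ 0` reverses `hsuper`.
theorem EForm_le_mul_varPi_of_le_edgeFlow_sub (hπ1 : ∑ i ∈ Icc 1 n, π i = 1) (hν0 : ν 0 = 0)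
    (hνn : ν n = 0) {f : ℕ → ℝ} {c : ℝ} (hfc : ∀ i ∈ Icc 1 n, f i ≤ c)
    (hsuper : ∀ i < n, f (i + 1) < c →
      lam * ((f (i + 1) - piMean n π f) * π (i + 1)) ≤ edgeFlow ν f i - edgeFlow ν f (i + 1)) :
    EForm n ν f f ≤ lam * varPi n π f := by
  have hvar : varPi n π f = ∑ i ∈ Icc 1 n, (f i - piMean n π f) * π i * (f i - c) := by
    rw [← covPi_self, covPi_eq_sum_sub_piMean_mul]
    simp only [mul_sub, sum_sub_distrib, ← sum_mul, sum_sub_piMean_mul_eq_zero hπ1, zero_mul,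
      sub_zero]
  calc EForm n ν f f
      = EForm n ν f (fun i => f i - c) := by simp only [EForm, sub_sub_sub_cancel_right]
    _ = ∑ i ∈ Icc 1 n, (edgeFlow ν f (i - 1) - edgeFlow ν f i) * (f i - c) :=
        EForm_eq_sum_edgeFlow_sub_mul hν0 hνn _ _
    _ ≤ ∑ i ∈ Icc 1 n, lam * ((f i - piMean n π f) * π i) * (f i - c) := by
        refine sum_le_sum fun i hi => ?_
        rcases (hfc i hi).lt_or_eq with hlt | heq
        · obtain ⟨i, rfl⟩ := Nat.exists_eq_add_of_le' (mem_Icc.1 hi).1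
          exact mul_le_mul_of_nonpos_right (hsuper i (mem_Icc.1 hi).2 hlt) (sub_neg.2 hlt).le
        · simp only [heq, sub_self, mul_zero, le_refl]
    _ = lam * varPi n π f := by simp only [hvar, mul_sum, mul_assoc]

theorem sq_sub_le_mul_sum_sq_div {f g : ℕ → ℝ} {i j : ℕ} (hij : i ≤ j)
    (hg : StrictMonoOn g (Set.Icc i j)) :
    (f j - f i) ^ 2 ≤
      (g j - g i) * ∑ k ∈ Ico i j, (f (k + 1) - f k) ^ 2 / (g (k + 1) - g k) := by
  have hpos : ∀ k ∈ Ico i j, 0 < g (k + 1) - g k := fun k hk => by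
    have hk := mem_Ico.1 hk
    exact sub_pos.2 (hg ⟨hk.1, hk.2.le⟩ ⟨by lia, hk.2⟩ k.lt_succ_self)
  rw [← sum_Ico_sub f hij, ← sum_Ico_sub g hij]
  refine sum_sq_le_sum_mul_sum_of_sq_le_mul _ (fun k hk => (hpos k hk).le)
    (fun k hk => div_nonneg (sq_nonneg _) (hpos k hk).le) fun k hk => ?_
  rw [mul_div_cancel₀ _ (hpos k hk).ne']

-- M.-F. Chen's variational lower bound for the spectral gap of a birth-death chain.
theorem mul_varPi_le_EForm_of_le_edgeFlow (hπ : ∀ i ∈ Icc 1 n, 0 ≤ π i)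
    (hπ1 : ∑ i ∈ Icc 1 n, π i = 1) (hlam : 0 ≤ lam) {g : ℕ → ℝ}
    (hg : StrictMonoOn g (Set.Icc 1 n))
    (hflow : ∀ k ∈ Icc 1 (n - 1),
      lam * ∑ j ∈ Icc 1 k, (piMean n π g - g j) * π j ≤ edgeFlow ν g k) (f : ℕ → ℝ) :
    lam * varPi n π f ≤ EForm n ν f f := by
  set S : ℕ → ℝ := fun j => ∑ k ∈ range j, (f (k + 1) - f k) ^ 2 / (g (k + 1) - g k) with hS
  have S_succ (k : ℕ) : S (k + 1) - S k = (f (k + 1) - f k) ^ 2 / (g (k + 1) - g k) := by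
    simp only [hS, sum_range_succ, add_sub_cancel_left]
  have hpos : ∀ k ∈ Icc 1 (n - 1), 0 < g (k + 1) - g k := fun k hk => by
    have hk := mem_Icc.1 hk
    exact sub_pos.2 (hg ⟨hk.1, by lia⟩ ⟨by lia, by lia⟩ k.lt_succ_self)
  have hcov : varPi n π f ≤ covPi n π g S := varPi_le_covPi hπ hπ1 fun i hi j hj hij => by
    rw [← sum_Ico_eq_sub _ hij]
    exact sq_sub_le_mul_sum_sq_div hij
      (hg.mono (Set.Icc_subset_Icc (mem_Icc.1 hi).1 (mem_Icc.1 hj).2))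
  calc lam * varPi n π f
      ≤ lam * covPi n π g S := by gcongr
    _ = ∑ k ∈ Icc 1 (n - 1),
          (lam * ∑ j ∈ Icc 1 k, (piMean n π g - g j) * π j) * (S (k + 1) - S k) := by
        rw [covPi_eq_sum_partialSum_mul_sub hπ1, mul_sum]
        exact sum_congr rfl fun k _ => (mul_assoc _ _ _).symm
    _ ≤ ∑ k ∈ Icc 1 (n - 1), edgeFlow ν g k * (S (k + 1) - S k) := by
        gcongr with k hk
        · rw [S_succ]
          exact div_nonneg (sq_nonneg _) (hpos k hk).le
        · exact hflow k hk
    _ = EForm n ν f f := sum_congr rfl fun k hk => by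
        have := (hpos k hk).ne'
        rw [S_succ, edgeFlow]
        field_simp
        ring

end RayleighQuotient

namespace PosPartRec

variable {n : ℕ} {π ν ψ : ℕ → ℝ} {gap lam : ℝ}

theorem edgeFlow_succ (hrec : PosPartRec n π ν lam ψ) (hν : ∀ i ∈ Icc 1 (n - 1), 0 < ν i)
    {i : ℕ} (hi : i + 1 < n) :
    edgeFlow ν ψ (i + 1) = max (edgeFlow ν ψ i - lam * (π (i + 1) * ψ (i + 1))) 0 := by
  have hνi := hν (i + 1) (mem_Icc.2 ⟨by lia, by lia⟩)
  rw [edgeFlow, hrec (i + 1) (by lia) hi, add_sub_cancel_left, div_mul_cancel₀ _ hνi.ne']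
  rfl

theorem edgeFlow_nonneg (hrec : PosPartRec n π ν lam ψ) (hν : ∀ i ∈ Icc 1 (n - 1), 0 < ν i)
    (hν0 : ν 0 = 0) {i : ℕ} (hi : i < n) : 0 ≤ edgeFlow ν ψ i := by
  cases i with
  | zero => exact (edgeFlow_zero hν0 ψ).ge
  | succ i => exact (le_max_right _ _).trans_eq (hrec.edgeFlow_succ hν hi).symm

theorem monotoneOn (hrec : PosPartRec n π ν lam ψ) (hν : ∀ i ∈ Icc 1 (n - 1), 0 < ν i) :
    MonotoneOn ψ (Set.Icc 1 n) := by
  refine monotoneOn_of_le_succ Set.ordConnected_Icc fun i _ hi hi' => ?_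
  rw [Nat.succ_eq_succ, Nat.succ_eq_add_one, hrec i hi.1 hi'.2]
  have hνi := hν i (mem_Icc.2 ⟨hi.1, Nat.le_sub_one_of_lt hi'.2⟩)
  exact le_add_of_nonneg_right (div_nonneg (le_max_right _ _) hνi.le)

theorem neg_mul_sum_le_edgeFlow (hrec : PosPartRec n π ν lam ψ)
    (hν : ∀ i ∈ Icc 1 (n - 1), 0 < ν i) (hν0 : ν 0 = 0) {k : ℕ} (hk : k < n) :
    -(lam * ∑ j ∈ Icc 1 k, ψ j * π j) ≤ edgeFlow ν ψ k := by
  induction k with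
  | zero => simp [edgeFlow_zero hν0]
  | succ k ih =>
    rw [hrec.edgeFlow_succ hν hk, sum_Icc_succ_top (by lia)]
    exact le_max_of_le_left (by linarith [ih (by lia)])

theorem nonneg_of_edgeFlow_eq_zero (hrec : PosPartRec n π ν lam ψ)
    (hπ : ∀ i ∈ Icc 1 n, 0 < π i) (hν : ∀ i ∈ Icc 1 (n - 1), 0 < ν i) (hν0 : ν 0 = 0)
    (hlam : 0 < lam) {i : ℕ} (hi1 : 1 ≤ i) (hin : i < n) (hzero : edgeFlow ν ψ i = 0) :
    0 ≤ ψ i := by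
  obtain ⟨i, rfl⟩ := Nat.exists_eq_add_of_le' hi1
  rw [hrec.edgeFlow_succ hν hin, max_eq_right_iff, sub_nonpos] at hzero
  have hprod : 0 ≤ lam * (π (i + 1) * ψ (i + 1)) :=
    (hrec.edgeFlow_nonneg hν hν0 (by lia)).trans hzero
  exact nonneg_of_mul_nonneg_right (nonneg_of_mul_nonneg_right hprod hlam)
    (hπ (i + 1) (mem_Icc.2 ⟨hi1, hin.le⟩))

theorem edgeFlow_eq_zero_of_le (hrec : PosPartRec n π ν lam ψ)
    (hπ : ∀ i ∈ Icc 1 n, 0 < π i) (hν : ∀ i ∈ Icc 1 (n - 1), 0 < ν i) (hν0 : ν 0 = 0)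
    (hlam : 0 < lam) {i j : ℕ} (hi1 : 1 ≤ i) (hij : i ≤ j) (hjn : j < n)
    (hzero : edgeFlow ν ψ i = 0) : edgeFlow ν ψ j = 0 := by
  induction j, hij using Nat.le_induction with
  | base => exact hzero
  | succ j hij ih =>
    have hj := ih (by lia)
    have hψ := hrec.nonneg_of_edgeFlow_eq_zero hπ hν hν0 hlam (by lia) (by lia) hj
    have hπj := hπ (j + 1) (mem_Icc.2 ⟨by lia, hjn.le⟩)
    have hνj := hν j (mem_Icc.2 ⟨by lia, by lia⟩)
    rw [hrec.edgeFlow_succ hν hjn, hj, (edgeFlow_eq_zero_iff hνj.ne').1 hj, zero_sub]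
    exact max_eq_right (neg_nonpos.2 (by positivity))

theorem edgeFlow_pos_of_lt (hrec : PosPartRec n π ν lam ψ)
    (hπ : ∀ i ∈ Icc 1 n, 0 < π i) (hν : ∀ i ∈ Icc 1 (n - 1), 0 < ν i) (hν0 : ν 0 = 0)
    (hlam : 0 < lam) {i : ℕ} (hi1 : 1 ≤ i) (hin : i < n) (hlt : ψ i < ψ n) :
    0 < edgeFlow ν ψ i := by
  refine (hrec.edgeFlow_nonneg hν hν0 hin).lt_of_ne' fun hzero => hlt.ne' ?_
  have hconst : ∀ j, i ≤ j → j ≤ n → ψ j = ψ i := by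
    intro j hij
    induction j, hij using Nat.le_induction with
    | base => exact fun _ => rfl
    | succ j hij ih =>
      intro hjn
      rw [← ih (by lia)]
      exact (edgeFlow_eq_zero_iff (hν j (mem_Icc.2 ⟨by lia, by lia⟩)).ne').1
        (hrec.edgeFlow_eq_zero_of_le hπ hν hν0 hlam hi1 hij hjn hzero)
  exact hconst n hin.le le_rfl

theorem mul_le_edgeFlow_min_sub (hrec : PosPartRec n π ν lam ψ)
    (hπ : ∀ i ∈ Icc 1 n, 0 < π i) (hν : ∀ i ∈ Icc 1 (n - 1), 0 < ν i) (hν0 : ν 0 = 0)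
    (hlam : 0 < lam) {c : ℝ} (hc : c ≤ ψ n) {i : ℕ} (hin : i < n) (hlt : ψ (i + 1) < c) :
    lam * (π (i + 1) * ψ (i + 1)) ≤
      edgeFlow ν (fun j => min (ψ j) c) i - edgeFlow ν (fun j => min (ψ j) c) (i + 1) := by
  have hin' : i + 1 < n := lt_of_le_of_ne hin fun h => (hlt.trans_le hc).ne (by rw [h])
  have hflow : edgeFlow ν ψ (i + 1) = edgeFlow ν ψ i - lam * (π (i + 1) * ψ (i + 1)) := by
    have hpos := hrec.edgeFlow_pos_of_lt hπ hν hν0 hlam (by lia) hin' (hlt.trans_le hc)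
    rw [hrec.edgeFlow_succ hν hin'] at hpos ⊢
    exact max_eq_left ((lt_max_iff.1 hpos).resolve_right (lt_irrefl 0)).le
  have hincoming : edgeFlow ν (fun j => min (ψ j) c) i = edgeFlow ν ψ i := by
    cases i with
    | zero => rw [edgeFlow_zero hν0, edgeFlow_zero hν0]
    | succ i =>
      have hle : ψ (i + 1) ≤ ψ (i + 2) :=
        hrec.monotoneOn hν ⟨by lia, by lia⟩ ⟨by lia, by lia⟩ (by lia)
      simp only [edgeFlow, min_eq_left hlt.le, min_eq_left (hle.trans hlt.le)]
  have houtgoing : edgeFlow ν (fun j => min (ψ j) c) (i + 1) ≤ edgeFlow ν ψ (i + 1) := by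
    simp only [edgeFlow, min_eq_left hlt.le]
    have hνi := hν (i + 1) (mem_Icc.2 ⟨by lia, by lia⟩)
    gcongr
    exact min_le_left _ _
  linarith

theorem gap_le_of_piMean_nonneg (hrec : PosPartRec n π ν lam ψ)
    (hπ : ∀ i ∈ Icc 1 n, 0 < π i) (hπ1 : ∑ i ∈ Icc 1 n, π i = 1)
    (hν : ∀ i ∈ Icc 1 (n - 1), 0 < ν i) (hν0 : ν 0 = 0) (hνn : ν n = 0)
    (hgap : IsSpectralGap n π ν gap) (hlam : 0 < lam) (hψ1 : ψ 1 < 0)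
    (hmean : 0 ≤ piMean n π ψ) : gap ≤ lam := by
  obtain ⟨j, hj⟩ : (Icc 1 n).Nonempty := nonempty_of_sum_ne_zero (hπ1.trans_ne one_ne_zero)
  have hn : 1 ≤ n := (mem_Icc.1 hj).1.trans (mem_Icc.1 hj).2
  have hmono := hrec.monotoneOn hν
  obtain ⟨c, hc, hc0⟩ : ∃ c ≤ ψ n, piMean n π (fun i => min (ψ i) c) = 0 :=
    exists_piMean_min_eq hπ1
      (fun i hi => hmono ⟨le_rfl, hn⟩ (mem_Icc.1 hi) (mem_Icc.1 hi).1)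
      (fun i hi => hmono (mem_Icc.1 hi) ⟨hn, le_rfl⟩ (mem_Icc.1 hi).2) ⟨hψ1.le, hmean⟩
  have hnonconst : Nonconstant n fun i => min (ψ i) c := by
    refine nonconstant_of_ne_piMean hπ1 (mem_Icc.2 ⟨le_rfl, hn⟩) ?_
    rw [hc0]
    exact ((min_le_left _ _).trans_lt hψ1).ne
  refine hgap.le_of_EForm_le hπ hπ1 hnonconst <|
    EForm_le_mul_varPi_of_le_edgeFlow_sub hπ1 hν0 hνn (fun _ _ => min_le_right _ _)
      fun i hin hlt => ?_
  have hlt : ψ (i + 1) < c := (min_lt_iff.1 hlt).resolve_right (lt_irrefl c)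
  rw [hc0, sub_zero, min_eq_left hlt.le, mul_comm (ψ (i + 1))]
  exact hrec.mul_le_edgeFlow_min_sub hπ hν hν0 hlam hc hin hlt

theorem edgeFlow_pos_of_piMean_nonpos (hrec : PosPartRec n π ν lam ψ)
    (hπ : ∀ i ∈ Icc 1 n, 0 < π i) (hν : ∀ i ∈ Icc 1 (n - 1), 0 < ν i) (hν0 : ν 0 = 0)
    (hlam : 0 < lam) (hψ1 : ψ 1 < 0) (hmean : piMean n π ψ ≤ 0) {k : ℕ} (hk1 : 1 ≤ k)
    (hkn : k < n) : 0 < edgeFlow ν ψ k := by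
  refine (hrec.edgeFlow_nonneg hν hν0 hkn).lt_of_ne' fun hzero => ?_
  have hmono := hrec.monotoneOn hν
  have hψk : 0 ≤ ψ k := hrec.nonneg_of_edgeFlow_eq_zero hπ hν hν0 hlam hk1 hkn hzero
  have hhead : 0 ≤ ∑ j ∈ Icc 1 k, ψ j * π j := by
    have := hrec.neg_mul_sum_le_edgeFlow hν hν0 hkn
    rw [hzero, neg_nonpos] at this
    exact nonneg_of_mul_nonneg_right this hlam
  have hψn : 0 < ψ n := by
    by_contra! hψn
    refine hhead.not_gt (sum_neg' (fun j hj => ?_) ⟨1, mem_Icc.2 ⟨le_rfl, hk1⟩, ?_⟩)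
    · have hj := mem_Icc.1 hj
      exact mul_nonpos_of_nonpos_of_nonneg
        ((hmono ⟨hj.1, by lia⟩ ⟨by lia, le_rfl⟩ (by lia)).trans hψn)
        (hπ j (mem_Icc.2 ⟨hj.1, by lia⟩)).le
    · exact mul_neg_of_neg_of_pos hψ1 (hπ 1 (mem_Icc.2 ⟨le_rfl, by lia⟩))
  have htail : 0 < ∑ j ∈ Ioc k n, ψ j * π j := by
    refine sum_pos' (fun j hj => ?_) ⟨n, mem_Ioc.2 ⟨hkn, le_rfl⟩, ?_⟩
    · have hj := mem_Ioc.1 hj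
      exact mul_nonneg (hψk.trans (hmono ⟨hk1, hkn.le⟩ ⟨by lia, hj.2⟩ hj.1.le))
        (hπ j (mem_Icc.2 ⟨by lia, hj.2⟩)).le
    · exact mul_pos hψn (hπ n (mem_Icc.2 ⟨by lia, le_rfl⟩))
  have hsplit : piMean n π ψ = ∑ j ∈ Icc 1 k, ψ j * π j + ∑ j ∈ Ioc k n, ψ j * π j := by
    have hIcc (m : ℕ) : Icc 1 m = Ioc 0 m := rfl
    rw [piMean, hIcc, hIcc, sum_Ioc_consecutive _ k.zero_le hkn.le]
  linarith

theorem le_gap_of_piMean_nonpos (hrec : PosPartRec n π ν lam ψ)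
    (hπ : ∀ i ∈ Icc 1 n, 0 < π i) (hπ1 : ∑ i ∈ Icc 1 n, π i = 1)
    (hν : ∀ i ∈ Icc 1 (n - 1), 0 < ν i) (hν0 : ν 0 = 0)
    (hgap : IsSpectralGap n π ν gap) (hlam : 0 < lam) (hψ1 : ψ 1 < 0)
    (hmean : piMean n π ψ ≤ 0) : lam ≤ gap := by
  have hstrict : StrictMonoOn ψ (Set.Icc 1 n) := by
    refine strictMonoOn_of_lt_succ Set.ordConnected_Icc fun i _ hi hi' => ?_
    have hνi := hν i (mem_Icc.2 ⟨hi.1, Nat.le_sub_one_of_lt hi'.2⟩)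
    have hflow := hrec.edgeFlow_pos_of_piMean_nonpos hπ hν hν0 hlam hψ1 hmean hi.1 hi'.2
    exact sub_pos.1 (pos_of_mul_pos_left hflow hνi.le)
  refine hgap.le_of_forall_le_EForm hπ hπ1 <|
    mul_varPi_le_EForm_of_le_edgeFlow (fun i hi => (hπ i hi).le) hπ1 hlam.le hstrict fun k hk => ?_
  have hk := mem_Icc.1 hk
  calc lam * ∑ j ∈ Icc 1 k, (piMean n π ψ - ψ j) * π j
      ≤ lam * ∑ j ∈ Icc 1 k, -ψ j * π j := by
        gcongr with j hj
        · exact (hπ j (mem_Icc.2 ⟨(mem_Icc.1 hj).1, by have := (mem_Icc.1 hj).2; lia⟩)).le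
        · linarith
    _ = -(lam * ∑ j ∈ Icc 1 k, ψ j * π j) := by
        simp only [neg_mul, sum_neg_distrib, mul_neg]
    _ ≤ edgeFlow ν ψ k := hrec.neg_mul_sum_le_edgeFlow hν hν0 (by lia)

end PosPartRec

theorem bisection_bracket {K : Type*} [Field K] [LinearOrder K] [IsStrictOrderedRing K]
    {L U sign : ℕ → K} {x : K} (hx : x ∈ Set.Icc (L 0) (U 0))
    (hupper : ∀ k, L 0 ≤ (L k + U k) / 2 → 0 ≤ sign k → x ≤ (L k + U k) / 2)
    (hlower : ∀ k, L 0 ≤ (L k + U k) / 2 → sign k ≤ 0 → (L k + U k) / 2 ≤ x)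
    (hupd : ∀ k,
      (0 < sign k → L (k + 1) = L k ∧ U (k + 1) = (L k + U k) / 2) ∧
      (sign k < 0 → L (k + 1) = (L k + U k) / 2 ∧ U (k + 1) = U k) ∧
      (sign k = 0 → L (k + 1) = (L k + U k) / 2 ∧ U (k + 1) = (L k + U k) / 2)) (k : ℕ) :
    L 0 ≤ L k ∧ x ∈ Set.Icc (L k) (U k) ∧ U k - L k ≤ (U 0 - L 0) / 2 ^ k := by
  induction k with
  | zero => exact ⟨le_rfl, hx, by simp⟩
  | succ k ih =>
    obtain ⟨hL, ⟨hLx, hxU⟩, hlen⟩ := ih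
    have hmid : L 0 ≤ (L k + U k) / 2 := by linarith
    have hhalf : (U 0 - L 0) / 2 ^ (k + 1) = (U 0 - L 0) / 2 ^ k / 2 := by rw [pow_succ, div_div]
    obtain ⟨hpos, hneg, hzero⟩ := hupd k
    rw [hhalf]
    rcases lt_trichotomy (sign k) 0 with h | h | h
    · obtain ⟨hL', hU'⟩ := hneg h
      rw [hL', hU']
      exact ⟨hmid, ⟨hlower k hmid h.le, hxU⟩, by linarith⟩
    · obtain ⟨hL', hU'⟩ := hzero h
      rw [hL', hU']
      exact ⟨hmid, ⟨hlower k hmid h.le, hupper k hmid h.ge⟩, by linarith⟩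
    · obtain ⟨hL', hU'⟩ := hpos h
      rw [hL', hU']
      exact ⟨hL, ⟨hLx, hupper k hmid h.le⟩, by linarith⟩

theorem stmt3 (n : ℕ) (hn : 2 ≤ n) (π ν : ℕ → ℝ)
    (hπ : ∀ i ∈ Finset.Icc 1 n, 0 < π i)
    (hπ1 : ∑ i ∈ Finset.Icc 1 n, π i = 1)
    (hν : ∀ i ∈ Finset.Icc 1 (n - 1), 0 < ν i)
    (hν0 : ν 0 = 0) (hνn : ν n = 0)
    (gap : ℝ) (hgap : IsSpectralGap n π ν gap)
    (a : ℝ) (ha : 0 < a)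
    (L U : ℕ → ℝ) (hL0 : 0 < L 0) (hLgap : L 0 < gap) (hgapU : gap < U 0)
    (ψ : ℕ → ℕ → ℝ)
    (hψ1 : ∀ k, ψ k 1 = -a)
    (hrec : ∀ k, PosPartRec n π ν ((L k + U k) / 2) (ψ k))
    (hupd : ∀ k,
      (0 < piMean n π (ψ k) → L (k + 1) = L k ∧ U (k + 1) = (L k + U k) / 2) ∧
      (piMean n π (ψ k) < 0 → L (k + 1) = (L k + U k) / 2 ∧ U (k + 1) = U k) ∧
      (piMean n π (ψ k) = 0 →
        L (k + 1) = (L k + U k) / 2 ∧ U (k + 1) = (L k + U k) / 2)) :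
    ∀ k, 0 ≤ max (U k - gap) (gap - L k) ∧
      max (U k - gap) (gap - L k) ≤ (U 0 - L 0) / 2 ^ k := by
  intro k
  have hψneg (k : ℕ) : ψ k 1 < 0 := by rw [hψ1 k]; exact neg_lt_zero.2 ha
  obtain ⟨-, ⟨hL, hU⟩, hlen⟩ := bisection_bracket ⟨hLgap.le, hgapU.le⟩
    (fun k hmid => (hrec k).gap_le_of_piMean_nonneg hπ hπ1 hν hν0 hνn hgap
      (hL0.trans_le hmid) (hψneg k))
    (fun k hmid => (hrec k).le_gap_of_piMean_nonpos hπ hπ1 hν hν0 hgap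
      (hL0.trans_le hmid) (hψneg k))
    hupd k
  exact ⟨le_max_of_le_left (sub_nonneg.2 hU), max_le (by linarith) (by linarith)⟩
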